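/- Fix real numbers q > 0 and r > 1 and an integer n ≥ 1. With P₁₂(n) = √(n⁴π⁴ + q/nʳ) − n²π² and P₂₂(n) = √(q/nʳ + 2P₁₂(n)), one has 0 < P₂₂(n) ≤ √(2q) · n^{−r/2}. -/

import Mathlib

/-!
Set `a = n²π²` and `c = q / nʳ`, so that `P₁₂ = √(a² + c) - a` and `P₂₂ = √(c + 2 P₁₂)`. The graph
of the square root lies below its tangent line at `a²`, so `P₁₂ ≤ c / (2a)`, while `0 ≤ P₁₂` by
monotonicity. Since `a ≥ 1`, this yields `c ≤ c + 2 P₁₂ ≤ 2c`, and taking square roots gives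
both bounds.
-/

/-- `P₁₂(n)` in the Neumann boundary control example. -/
noncomputable def neuP12 (q r : ℝ) (n : ℕ) : ℝ :=
  Real.sqrt ((n : ℝ) ^ 4 * Real.pi ^ 4 + q / (n : ℝ) ^ r) - (n : ℝ) ^ 2 * Real.pi ^ 2

/-- `P₂₂(n)` in the Neumann boundary control example. -/
noncomputable def neuP22 (q r : ℝ) (n : ℕ) : ℝ :=
  Real.sqrt (q / (n : ℝ) ^ r + 2 * neuP12 q r n)

open scoped Real

theorem sqrt_sq_add_sub_nonneg {a c : ℝ} (hc : 0 ≤ c) : 0 ≤ √(a ^ 2 + c) - a :=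
  sub_nonneg.2 (Real.le_sqrt_of_sq_le (le_add_of_nonneg_right hc))

theorem sqrt_sq_add_sub_le_div {a c : ℝ} (ha : 0 < a) (hc : -a ^ 2 ≤ c) :
    √(a ^ 2 + c) - a ≤ c / (2 * a) := by
  have hratio : -1 ≤ c / a ^ 2 := by
    rw [le_div_iff₀ (by positivity)]
    linarith
  have hfactor : √(a ^ 2 + c) = a * √(1 + c / a ^ 2) := by
    have hsplit : a ^ 2 + c = a ^ 2 * (1 + c / a ^ 2) := by field_simp
    rw [hsplit, Real.sqrt_mul (sq_nonneg a), Real.sqrt_sq ha.le]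
  calc √(a ^ 2 + c) - a = a * √(1 + c / a ^ 2) - a := by rw [hfactor]
    _ ≤ a * (1 + c / a ^ 2 / 2) - a := by gcongr; exact Real.sqrt_one_add_le hratio
    _ = c / (2 * a) := by field_simp; ring

theorem sqrt_div_rpow (x r : ℝ) {y : ℝ} (hy : 0 ≤ y) : √(x / y ^ r) = √x * y ^ (-(r / 2)) := by
  have hsqrt : √(y ^ r) = y ^ (r / 2) := by
    rw [Real.sqrt_eq_rpow, ← Real.rpow_mul hy, mul_one_div]
  rw [Real.sqrt_div' x (Real.rpow_nonneg hy r), hsqrt, Real.rpow_neg hy, div_eq_mul_inv]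

theorem neuP12_eq_sqrt_sq_add_sub (q r : ℝ) (n : ℕ) :
    neuP12 q r n = √(((n : ℝ) ^ 2 * π ^ 2) ^ 2 + q / (n : ℝ) ^ r) - (n : ℝ) ^ 2 * π ^ 2 := by
  rw [neuP12]
  ring_nf

theorem neuP12_nonneg {q : ℝ} (hq : 0 ≤ q) (r : ℝ) (n : ℕ) : 0 ≤ neuP12 q r n := by
  rw [neuP12_eq_sqrt_sq_add_sub]
  exact sqrt_sq_add_sub_nonneg (by positivity)

theorem neuP12_le {q : ℝ} (hq : 0 ≤ q) (r : ℝ) {n : ℕ} (hn : 1 ≤ n) :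
    neuP12 q r n ≤ q / (n : ℝ) ^ r / (2 * ((n : ℝ) ^ 2 * π ^ 2)) := by
  have hc : 0 ≤ q / (n : ℝ) ^ r := by positivity
  rw [neuP12_eq_sqrt_sq_add_sub]
  exact sqrt_sq_add_sub_le_div (by positivity) (hc.trans' (neg_nonpos.2 (sq_nonneg _)))

theorem one_le_sq_mul_pi_sq {n : ℕ} (hn : 1 ≤ n) : 1 ≤ (n : ℝ) ^ 2 * π ^ 2 :=
  one_le_mul_of_one_le_of_one_le (one_le_pow₀ (Nat.one_le_cast.2 hn))
    (one_le_pow₀ (by linarith [Real.pi_gt_three]))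

theorem two_mul_neuP12_le {q : ℝ} (hq : 0 ≤ q) (r : ℝ) {n : ℕ} (hn : 1 ≤ n) :
    2 * neuP12 q r n ≤ q / (n : ℝ) ^ r :=
  calc 2 * neuP12 q r n ≤ 2 * (q / (n : ℝ) ^ r / (2 * ((n : ℝ) ^ 2 * π ^ 2))) := by
        gcongr; exact neuP12_le hq r hn
    _ = q / (n : ℝ) ^ r / ((n : ℝ) ^ 2 * π ^ 2) := by field_simp
    _ ≤ q / (n : ℝ) ^ r := div_le_self (by positivity) (one_le_sq_mul_pi_sq hn)

theorem neuP22_pos {q : ℝ} (hq : 0 < q) (r : ℝ) {n : ℕ} (hn : 1 ≤ n) : 0 < neuP22 q r n := by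
  have hc : 0 < q / (n : ℝ) ^ r := by positivity
  exact Real.sqrt_pos.2 (by linarith [neuP12_nonneg hq.le r n])

theorem neuP22_le {q : ℝ} (hq : 0 ≤ q) (r : ℝ) {n : ℕ} (hn : 1 ≤ n) :
    neuP22 q r n ≤ √(2 * q) * (n : ℝ) ^ (-(r / 2)) :=
  calc neuP22 q r n ≤ √(2 * q / (n : ℝ) ^ r) :=
        Real.sqrt_le_sqrt (by rw [mul_div_assoc]; linarith [two_mul_neuP12_le hq r hn])
    _ = √(2 * q) * (n : ℝ) ^ (-(r / 2)) := sqrt_div_rpow (2 * q) r n.cast_nonneg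

theorem neumann_example_P22_bound_general {q : ℝ} (hq : 0 < q) (r : ℝ) {n : ℕ} (hn : 1 ≤ n) :
    0 < neuP22 q r n ∧ neuP22 q r n ≤ √(2 * q) * (n : ℝ) ^ (-(r / 2)) :=
  ⟨neuP22_pos hq r hn, neuP22_le hq.le r hn⟩

/-- In the Neumann example (α = 0, β = 1, R = 1, Qⁿ = q/nʳ · I),
the Riccati entry `P₂₂(n) = √(q/nʳ + 2P₁₂(n))` satisfies
`0 < P₂₂(n) ≤ √(2q) · n^{−r/2}`. -/
theorem neumann_example_P22_bound (q r : ℝ) (hq : 0 < q) (hr : 1 < r)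
    (n : ℕ) (hn : 1 ≤ n) :
    0 < neuP22 q r n ∧
    neuP22 q r n ≤ Real.sqrt (2 * q) * (n : ℝ) ^ (-(r / 2)) :=
  neumann_example_P22_bound_general hq r hn
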